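/- arXiv:1208.5273 — 2 statements merged into one kernel-verified Lean document; each statement's English description precedes it below -/
import Mathlib

section
/- Discrete fixed point bound. Let ω be an averaging kernel with Δ-discretization ω̂ and (hf, hg) ∈ 𝒳². Suppose there exist lattice functions F, G : {x_i = iΔ} → [0,1], nondecreasing in i, with limits 0 at −∞ and 1 at +∞, satisfying G(x_i) = hg((F ⊗ ω̂)(x_i)) and F(x_i) = hf((G ⊗ ω̂)(x_i)) for all i (a (0,1)-interpolating spatial fixed point of the discrete spatially coupled recursion). Then |A(hf, hg)| ≤ 2Δ‖ω‖∞. -/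
open MeasureTheory Filter Set

noncomputable section

/-- Convolution `(f ⊗ ω)(x) = ∫ y, f y · ω (x − y)`. -/
def conv (f ω : ℝ → ℝ) (x : ℝ) : ℝ := ∫ y : ℝ, f y * ω (x - y)

/-- `ω` is an averaging kernel: even, nonnegative, of bounded variation, integrating to 1. -/
def IsAveragingKernel (ω : ℝ → ℝ) : Prop :=
  (∀ x, ω (-x) = ω x) ∧ (∀ x, 0 ≤ ω x) ∧ BoundedVariationOn ω Set.univ ∧
    MeasureTheory.Integrable ω ∧ (∫ x : ℝ, ω x) = 1

/-- The essential supremum `‖ω‖∞` of a kernel, as a real number. -/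
def kerSup (ω : ℝ → ℝ) : ℝ := (eLpNorm ω ⊤ MeasureTheory.volume).toReal

/-- `ω` is regular: for some `W ∈ (0,∞]`, it vanishes outside `[−W, W]` and is
positive on `(−W, W)` (the case `W = ∞` being that `ω` is everywhere positive). -/
def IsRegularKernel (ω : ℝ → ℝ) : Prop :=
  (∀ x, 0 < ω x) ∨
    ∃ W : ℝ, 0 < W ∧ (∀ x, W < |x| → ω x = 0) ∧ (∀ x, |x| < W → 0 < ω x)

/-- Membership in `𝒳`: nondecreasing self-maps of `[0,1]`. -/
def MemX (h : ℝ → ℝ) : Prop :=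
  MonotoneOn h (Icc 0 1) ∧ MapsTo h (Icc 0 1) (Icc 0 1)

/-- Left limit `h(u−)` of `h ∈ 𝒳` at `u ∈ [0,1]`, with the convention `h(0−) = 0`. -/
def lm (h : ℝ → ℝ) (u : ℝ) : ℝ := if u ≤ 0 then 0 else sSup (h '' Ico 0 u)

/-- Right limit `h(u+)` of `h ∈ 𝒳` at `u ∈ [0,1]`, with the convention `h(1+) = 1`. -/
def rm (h : ℝ → ℝ) (u : ℝ) : ℝ := if 1 ≤ u then 1 else sInf (h '' Ioc u 1)

/-- A canonical generalized inverse of `h ∈ 𝒳` (any valid inverse has the same integrals,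
so the potential below is unambiguous). -/
def Xinv (h : ℝ → ℝ) (v : ℝ) : ℝ := sInf ({1} ∪ {u ∈ Icc (0:ℝ) 1 | v ≤ h u})

/-- The potential `Φ(hf, hg; u, v) = ∫₀ᵘ hg⁻¹ + ∫₀ᵛ hf⁻¹ − u·v`. -/
def Pot (hf hg : ℝ → ℝ) (u v : ℝ) : ℝ :=
  (∫ x in (0:ℝ)..u, Xinv hg x) + (∫ x in (0:ℝ)..v, Xinv hf x) - u * v

/-- `A(hf, hg) = Φ(hf, hg; 1, 1)`. -/
def Agap (hf hg : ℝ → ℝ) : ℝ := Pot hf hg 1 1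

/-- `(u,v)` is a crossing point of `(hf, hg)`:
`u ∈ [hg(v−), hg(v+)]` and `v ∈ [hf(u−), hf(u+)]`. -/
def IsCrossing (hf hg : ℝ → ℝ) (u v : ℝ) : Prop :=
  u ∈ Icc (0:ℝ) 1 ∧ v ∈ Icc (0:ℝ) 1 ∧
    u ∈ Icc (lm hg v) (rm hg v) ∧ v ∈ Icc (lm hf u) (rm hf u)

/-- The strictly positive gap condition: there is a nontrivial crossing point, and every
nontrivial crossing point satisfies `Φ(hf, hg; u, v) > max {0, A(hf, hg)}`. -/
def StrictPosGap (hf hg : ℝ → ℝ) : Prop :=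
  (∃ u v, IsCrossing hf hg u v ∧ ¬(u = 0 ∧ v = 0) ∧ ¬(u = 1 ∧ v = 1)) ∧
    ∀ u v, IsCrossing hf hg u v → ¬(u = 0 ∧ v = 0) → ¬(u = 1 ∧ v = 1) →
      max 0 (Agap hf hg) < Pot hf hg u v

/-- Membership in `Ψ`: nondecreasing functions `ℝ → [0,1]`. -/
def MemPsi (f : ℝ → ℝ) : Prop := Monotone f ∧ ∀ x, f x ∈ Icc (0:ℝ) 1

/-- `f` is `(a,b)`-interpolating: limits `a` at `−∞` and `b` at `+∞`. -/
def Interpolates (f : ℝ → ℝ) (a b : ℝ) : Prop :=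
  Filter.Tendsto f Filter.atBot (nhds a) ∧ Filter.Tendsto f Filter.atTop (nhds b)

/-- The `Δ`-discretization `ω̂ᵢ = ∫_{(i−1/2)Δ}^{(i+1/2)Δ} ω(z) dz` of a kernel. -/
def dker (ω : ℝ → ℝ) (Δ : ℝ) (i : ℤ) : ℝ :=
  ∫ z in (((i : ℝ) - 1/2) * Δ)..(((i : ℝ) + 1/2) * Δ), ω z

/-- Discrete convolution `(f ⊗ ω̂)(xᵢ) = Σⱼ ω̂_{i−j} f(xⱼ)`. -/
def dconv (f : ℤ → ℝ) (ωh : ℤ → ℝ) (i : ℤ) : ℝ := ∑' j : ℤ, ωh (i - j) * f j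


lemma aux_congr {f g : ℤ → ℝ} {c : ℝ} (h : ∀ i, f i = g i) : HasSum f c ↔ HasSum g c := by
  rw [funext h]

lemma aux_telescope {Φ : ℤ → ℝ} {c d : ℝ} (hm : Monotone Φ)
    (hb : Tendsto Φ atBot (nhds d)) (ht : Tendsto Φ atTop (nhds c)) :
    HasSum (fun i : ℤ => Φ i - Φ (i - 1)) (c - d) := by
  have h1 : HasSum (fun n : ℕ => Φ (n : ℤ) - Φ ((n : ℤ) - 1)) (c - Φ (-1)) := by
    rw [hasSum_iff_tendsto_nat_of_nonneg (fun i => sub_nonneg.2 (hm (by omega)))]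
    have e : ∀ n : ℕ, ∑ i ∈ Finset.range n, (Φ (i : ℤ) - Φ ((i : ℤ) - 1))
        = Φ ((n : ℤ) - 1) - Φ (-1) := by
      intro n
      induction n with
      | zero => simp
      | succ k ih => rw [Finset.sum_range_succ, ih]; push_cast; simp
    simp_rw [e]
    refine Tendsto.sub_const (ht.comp ?_) _
    exact tendsto_atTop_add_const_right _ (-1) tendsto_natCast_atTop_atTop
  have h2 : HasSum (fun n : ℕ => Φ (-((n : ℤ) + 1)) - Φ (-((n : ℤ) + 1) - 1)) (Φ (-1) - d) := by
    rw [hasSum_iff_tendsto_nat_of_nonneg (fun i => sub_nonneg.2 (hm (by omega)))]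
    have e : ∀ n : ℕ, ∑ i ∈ Finset.range n, (Φ (-((i : ℤ) + 1)) - Φ (-((i : ℤ) + 1) - 1))
        = Φ (-1) - Φ (-((n : ℤ) + 1)) := by
      intro n
      induction n with
      | zero => simp
      | succ k ih =>
        rw [Finset.sum_range_succ, ih]; push_cast
        rw [show (-((k : ℤ) + 1) - 1) = -((k : ℤ) + 1 + 1) by ring]; ring
    simp_rw [e]
    refine Tendsto.const_sub _ (hb.comp ?_)
    exact tendsto_neg_atTop_atBot.comp
      (tendsto_atTop_add_const_right _ 1 tendsto_natCast_atTop_atTop)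
  have := HasSum.of_nat_of_neg_add_one (f := fun i : ℤ => Φ i - Φ (i - 1)) h1 h2
  convert this using 1
  ring

lemma aux_dker_nonneg {ω : ℝ → ℝ} {Δ : ℝ} (hΔ : 0 < Δ) (h0 : ∀ x, 0 ≤ ω x) (i : ℤ) :
    0 ≤ dker ω Δ i :=
  intervalIntegral.integral_nonneg (by nlinarith) (fun x _ => h0 x)

lemma aux_dker_even {ω : ℝ → ℝ} {Δ : ℝ} (he : ∀ x, ω (-x) = ω x) (i : ℤ) :
    dker ω Δ (-i) = dker ω Δ i := by
  unfold dker
  have := intervalIntegral.integral_comp_neg (a := (((i : ℝ) - 1/2) * Δ))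
    (b := (((i : ℝ) + 1/2) * Δ)) ω
  simp_rw [he] at this
  rw [this]
  congr 1 <;> push_cast <;> ring

lemma aux_dker_sum {ω : ℝ → ℝ} {Δ : ℝ} (hΔ : 0 < Δ) (h0 : ∀ x, 0 ≤ ω x)
    (hi : Integrable ω) (h1 : (∫ x : ℝ, ω x) = 1) : HasSum (dker ω Δ) 1 := by
  have key := aux_telescope (Φ := fun i : ℤ => ∫ z in (0:ℝ)..(((i : ℝ) + 1/2) * Δ), ω z)
    (c := ∫ z in Ioi (0:ℝ), ω z) (d := - ∫ z in Iic (0:ℝ), ω z) ?_ ?_ ?_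
  · convert key using 1
    · funext i
      rw [intervalIntegral.integral_interval_sub_left hi.intervalIntegrable hi.intervalIntegrable]
      unfold dker
      congr 1; push_cast; ring
    · rw [sub_neg_eq_add, add_comm, intervalIntegral.integral_Iic_add_Ioi hi.integrableOn
        hi.integrableOn, h1]
  · intro i j hij
    have hij' : (i : ℝ) ≤ j := by exact_mod_cast hij
    rw [← sub_nonneg]
    simp only
    rw [intervalIntegral.integral_interval_sub_left hi.intervalIntegrable hi.intervalIntegrable]
    exact intervalIntegral.integral_nonneg (by nlinarith) (fun x _ => h0 x)
  · simp_rw [intervalIntegral.integral_symm _ (0:ℝ)]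
    refine Tendsto.neg ?_
    refine intervalIntegral_tendsto_integral_Iic _ hi.integrableOn ?_
    exact (tendsto_atBot_add_const_right _ _ (tendsto_intCast_atBot_iff.2 tendsto_id)).atBot_mul_const hΔ
  · refine intervalIntegral_tendsto_integral_Ioi _ hi.integrableOn ?_
    exact (tendsto_atTop_add_const_right _ _ (tendsto_intCast_atTop_atTop)).atTop_mul_const hΔ

lemma aux_dker_le {ω : ℝ → ℝ} {Δ : ℝ} (hΔ : 0 < Δ) (hω : IsAveragingKernel ω) (i : ℤ) :
    dker ω Δ i ≤ Δ * kerSup ω := by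
  obtain ⟨he, h0, hbv, hi, h1⟩ := hω
  have hmem : MemLp ω ⊤ volume := by
    refine memLp_top_of_bound hi.aestronglyMeasurable
      (‖ω 0‖ + (eVariationOn ω Set.univ).toReal) (Eventually.of_forall fun x => ?_)
    have := hbv.dist_le (mem_univ x) (mem_univ (0:ℝ))
    rw [dist_eq_norm] at this
    have h3 := norm_sub_norm_le (ω x) (ω 0)
    linarith
  have hae : ∀ᵐ x : ℝ, ‖ω x‖ ≤ kerSup ω := by
    filter_upwards [ae_le_eLpNormEssSup (f := ω) (μ := volume)] with x hx
    unfold kerSup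
    rw [← eLpNorm_exponent_top] at hx
    have := ENNReal.toReal_mono hmem.2.ne hx
    simpa using this
  have := intervalIntegral.norm_integral_le_of_norm_le_const_ae
    (a := (((i : ℝ) - 1/2) * Δ)) (b := (((i : ℝ) + 1/2) * Δ)) (C := kerSup ω) (f := ω)
    (hae.mono fun x hx _ => hx)
  rw [show ((i : ℝ) + 1/2) * Δ - ((i : ℝ) - 1/2) * Δ = Δ by ring, abs_of_pos hΔ] at this
  unfold dker
  exact (le_abs_self _).trans (this.trans_eq (mul_comm _ _))

lemma aux_Xinv_integral {h : ℝ → ℝ} (hh : MemX h) {a g : ℤ → ℝ} (ha : ∀ i, a i ∈ Icc (0:ℝ) 1)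
    (hg : ∀ i, g i = h (a i)) (hgm : Monotone g) (hgr : ∀ i, g i ∈ Icc (0:ℝ) 1)
    (hb : Tendsto g atBot (nhds 0)) (ht : Tendsto g atTop (nhds 1)) :
    ∃ t : ℤ → ℝ, HasSum t (∫ x in (0:ℝ)..1, Xinv h x) ∧
      ∀ i, a (i - 1) * (g i - g (i - 1)) ≤ t i ∧ t i ≤ a i * (g i - g (i - 1)) := by
  have hbdd : ∀ v, BddBelow ({1} ∪ {u ∈ Icc (0:ℝ) 1 | v ≤ h u}) := by
    intro v
    refine ⟨0, ?_⟩
    rintro u (hu | hu)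
    · rw [mem_singleton_iff.1 hu]; exact zero_le_one
    · exact hu.1.1
  have hmono : Monotone (Xinv h) := by
    intro v w hvw
    refine csInf_le_csInf (hbdd v) ⟨1, Or.inl rfl⟩ ?_
    rintro u (hu | hu)
    · exact Or.inl hu
    · exact Or.inr ⟨hu.1, hvw.trans hu.2⟩
  have hnn : ∀ v, 0 ≤ Xinv h v := by
    intro v
    refine le_csInf ⟨1, Or.inl rfl⟩ ?_
    rintro u (hu | hu)
    · rw [mem_singleton_iff.1 hu]; exact zero_le_one
    · exact hu.1.1
  have hint : ∀ x y, IntervalIntegrable (Xinv h) volume x y :=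
    fun x y => hmono.intervalIntegrable
  have hcont : Continuous (fun u => ∫ x in (0:ℝ)..u, Xinv h x) :=
    intervalIntegral.continuous_primitive hint 0
  have key := aux_telescope (Φ := fun i : ℤ => ∫ x in (0:ℝ)..(g i), Xinv h x)
    (c := ∫ x in (0:ℝ)..1, Xinv h x) (d := ∫ x in (0:ℝ)..0, Xinv h x) ?_ 
    ((hcont.tendsto 0).comp hb) ((hcont.tendsto 1).comp ht)
  · rw [intervalIntegral.integral_same, sub_zero] at key
    refine ⟨_, key, fun i => ?_⟩
    have hle : g (i - 1) ≤ g i := hgm (by omega)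
    rw [intervalIntegral.integral_interval_sub_left (hint _ _) (hint _ _)]
    constructor
    · have := intervalIntegral.integral_mono_on_of_le_Ioo (μ := volume) hle
        (f := fun _ => a (i - 1)) (g := Xinv h) intervalIntegrable_const (hint _ _) ?_
      · rw [intervalIntegral.integral_const, smul_eq_mul] at this
        linarith
      · intro x hx
        refine le_csInf ⟨1, Or.inl rfl⟩ ?_
        rintro u (hu | hu)
        · rw [mem_singleton_iff.1 hu]; exact (ha _).2
        · by_contra hlt
          have h1 := hh.1 hu.1 (ha (i - 1)) (not_le.1 hlt).le
          have h2 := hu.2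
          rw [← hg] at h1
          linarith [hx.1]
    · have := intervalIntegral.integral_mono_on_of_le_Ioo (μ := volume) hle
        (g := fun _ => a i) (f := Xinv h) (hint _ _) intervalIntegrable_const ?_
      · rw [intervalIntegral.integral_const, smul_eq_mul] at this
        linarith
      · intro x hx
        refine csInf_le (hbdd x) (Or.inr ⟨ha i, ?_⟩)
        rw [← hg]; exact hx.2.le
  · intro i j hij
    rw [← sub_nonneg]
    simp only
    rw [intervalIntegral.integral_interval_sub_left (hint _ _) (hint _ _)]
    exact intervalIntegral.integral_nonneg (hgm hij) (fun x _ => hnn x)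

lemma aux_summ {w f : ℤ → ℝ} (hw : HasSum w 1) (hw0 : ∀ i, 0 ≤ w i)
    (hf : ∀ i, f i ∈ Icc (0:ℝ) 1) (i : ℤ) : Summable (fun l => w l * f (i - l)) :=
  Summable.of_nonneg_of_le (fun l => mul_nonneg (hw0 l) (hf _).1)
    (fun l => mul_le_of_le_one_right (hw0 l) (hf _).2) hw.summable

lemma aux_dconv_eq (w f : ℤ → ℝ) (i : ℤ) : dconv f w i = ∑' l, w l * f (i - l) := by
  unfold dconv
  rw [← (Equiv.subLeft i).tsum_eq]
  simp

lemma aux_summ' {w f : ℤ → ℝ} (hw : HasSum w 1) (hw0 : ∀ i, 0 ≤ w i)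
    (hf : ∀ i, f i ∈ Icc (0:ℝ) 1) (i : ℤ) : Summable (fun j => w (i - j) * f j) := by
  rw [← (Equiv.subLeft i).summable_iff]
  simpa [Function.comp_def] using aux_summ hw hw0 hf i

lemma aux_dconv_mono {w f : ℤ → ℝ} (hw : HasSum w 1) (hw0 : ∀ i, 0 ≤ w i)
    (hf : ∀ i, f i ∈ Icc (0:ℝ) 1) (hm : Monotone f) : Monotone (dconv f w) := by
  intro i j hij
  rw [aux_dconv_eq, aux_dconv_eq]
  exact (aux_summ hw hw0 hf i).tsum_le_tsum
    (fun l => mul_le_mul_of_nonneg_left (hm (by omega)) (hw0 l)) (aux_summ hw hw0 hf j)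

lemma aux_dconv_range {w f : ℤ → ℝ} (hw : HasSum w 1) (hw0 : ∀ i, 0 ≤ w i)
    (hf : ∀ i, f i ∈ Icc (0:ℝ) 1) (i : ℤ) : dconv f w i ∈ Icc (0:ℝ) 1 := by
  rw [aux_dconv_eq]
  refine ⟨tsum_nonneg fun l => mul_nonneg (hw0 l) (hf _).1, ?_⟩
  rw [← hw.tsum_eq]
  exact (aux_summ hw hw0 hf i).tsum_le_tsum
    (fun l => mul_le_of_le_one_right (hw0 l) (hf _).2) hw.summable

lemma aux_dconv_tendsto {w f : ℤ → ℝ} (hw : HasSum w 1) (hw0 : ∀ i, 0 ≤ w i)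
    (hf : ∀ i, f i ∈ Icc (0:ℝ) 1) {L : Filter ℤ} {c : ℝ}
    (hL : ∀ l : ℤ, Tendsto (fun i => i - l) L L) (h : Tendsto f L (nhds c)) :
    Tendsto (dconv f w) L (nhds c) := by
  have e : dconv f w = fun i => ∑' l, w l * f (i - l) := funext (aux_dconv_eq w f)
  rw [e]
  have := tendsto_tsum_of_dominated_convergence (𝓕 := L) (f := fun i l => w l * f (i - l))
    (g := fun l => w l * c) (bound := w) hw.summable
    (fun l => (h.comp (hL l)).const_mul (w l))
    (Eventually.of_forall fun i l => by
      rw [Real.norm_of_nonneg (mul_nonneg (hw0 l) (hf _).1)]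
      exact mul_le_of_le_one_right (hw0 l) (hf _).2)
  rwa [tsum_mul_right, hw.tsum_eq, one_mul] at this

lemma aux_dconv_diff {w f : ℤ → ℝ} (hw : HasSum w 1) (hw0 : ∀ i, 0 ≤ w i)
    (hf : ∀ i, f i ∈ Icc (0:ℝ) 1) (i : ℤ) :
    HasSum (fun j => w (i - j) * (f j - f (j - 1))) (dconv f w i - dconv f w (i - 1)) := by
  have h1 : HasSum (fun l => w l * f (i - l)) (dconv f w i) := by
    rw [aux_dconv_eq]; exact (aux_summ hw hw0 hf i).hasSum
  have h2 : HasSum (fun l => w l * f (i - 1 - l)) (dconv f w (i - 1)) := by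
    rw [aux_dconv_eq]; exact (aux_summ hw hw0 hf (i - 1)).hasSum
  have h3 := h1.sub h2
  rw [← (Equiv.subLeft i).hasSum_iff] at h3
  refine (aux_congr fun j => ?_).mpr h3
  simp only [Function.comp_apply, Equiv.subLeft_apply, mul_sub]
  rw [show i - (i - j) = j by ring, show i - 1 - (i - j) = j - 1 by ring]

lemma aux_dconv_diff_le {w f : ℤ → ℝ} {M : ℝ} (hw : HasSum w 1) (hw0 : ∀ i, 0 ≤ w i)
    (hM : ∀ i, w i ≤ M) (hf : ∀ i, f i ∈ Icc (0:ℝ) 1) (hm : Monotone f)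
    (hs : HasSum (fun i => f i - f (i - 1)) 1) (i : ℤ) :
    dconv f w i - dconv f w (i - 1) ≤ M := by
  have := hasSum_le (fun j => mul_le_mul_of_nonneg_right (hM (i - j))
    (sub_nonneg.2 (hm (show j - 1 ≤ j by omega)))) (aux_dconv_diff hw hw0 hf i) (hs.mul_left M)
  linarith

/-- **Discrete fixed point bound.** -/
theorem discrete_fixed_point_bound
    (ω hf hg : ℝ → ℝ) (Δ : ℝ) (hΔ : 0 < Δ)
    (hω : IsAveragingKernel ω) (hhf : MemX hf) (hhg : MemX hg)
    (F G : ℤ → ℝ) (hFmono : Monotone F) (hGmono : Monotone G)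
    (hFrange : ∀ i, F i ∈ Icc (0:ℝ) 1) (hGrange : ∀ i, G i ∈ Icc (0:ℝ) 1)
    (hFbot : Filter.Tendsto F Filter.atBot (nhds 0))
    (hFtop : Filter.Tendsto F Filter.atTop (nhds 1))
    (hGbot : Filter.Tendsto G Filter.atBot (nhds 0))
    (hGtop : Filter.Tendsto G Filter.atTop (nhds 1))
    (hfixG : ∀ i, G i = hg (dconv F (dker ω Δ) i))
    (hfixF : ∀ i, F i = hf (dconv G (dker ω Δ) i)) :
    |Agap hf hg| ≤ 2 * Δ * kerSup ω := by
  set w := dker ω Δ with hwdef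
  have hw : HasSum w 1 := aux_dker_sum hΔ hω.2.1 hω.2.2.2.1 hω.2.2.2.2
  have hw0 : ∀ i, 0 ≤ w i := aux_dker_nonneg hΔ hω.2.1
  have hwe : ∀ i, w (-i) = w i := aux_dker_even hω.1
  have hM : ∀ i, w i ≤ Δ * kerSup ω := aux_dker_le hΔ hω
  set M := Δ * kerSup ω with hMdef
  have hM0 : 0 ≤ M := (hw0 0).trans (hM 0)
  set a := dconv F w with hadef
  set b := dconv G w with hbdef
  have har : ∀ i, a i ∈ Icc (0:ℝ) 1 := aux_dconv_range hw hw0 hFrange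
  have hbr : ∀ i, b i ∈ Icc (0:ℝ) 1 := aux_dconv_range hw hw0 hGrange
  have ham : Monotone a := aux_dconv_mono hw hw0 hFrange hFmono
  have hbm : Monotone b := aux_dconv_mono hw hw0 hGrange hGmono
  have hat : Tendsto a atTop (nhds 1) := aux_dconv_tendsto hw hw0 hFrange
    (fun l => tendsto_atTop_add_const_right _ (-l) tendsto_id) hFtop
  have hab : Tendsto a atBot (nhds 0) := aux_dconv_tendsto hw hw0 hFrange
    (fun l => tendsto_atBot_add_const_right _ (-l) tendsto_id) hFbot
  have hdF : HasSum (fun i => F i - F (i - 1)) 1 := by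
    simpa using aux_telescope hFmono hFbot hFtop
  have hdG : HasSum (fun i => G i - G (i - 1)) 1 := by
    simpa using aux_telescope hGmono hGbot hGtop
  have hdF0 : ∀ i, 0 ≤ F i - F (i - 1) := fun i => sub_nonneg.2 (hFmono (by omega))
  have hdG0 : ∀ i, 0 ≤ G i - G (i - 1) := fun i => sub_nonneg.2 (hGmono (by omega))
  have hda : ∀ i, a i - a (i - 1) ≤ M := aux_dconv_diff_le hw hw0 hM hFrange hFmono hdF
  have hdb : ∀ i, b i - b (i - 1) ≤ M := aux_dconv_diff_le hw hw0 hM hGrange hGmono hdG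
  obtain ⟨t, ht, htb⟩ := aux_Xinv_integral hhg har hfixG hGmono hGrange hGbot hGtop
  obtain ⟨s, hs, hsb⟩ := aux_Xinv_integral hhf hbr hfixF hFmono hFrange hFbot hFtop
  -- summability
  have hP : Summable (fun i => a (i - 1) * (G i - G (i - 1))) :=
    Summable.of_nonneg_of_le (fun i => mul_nonneg (har _).1 (hdG0 i))
      (fun i => mul_le_of_le_one_left (hdG0 i) (har _).2) hdG.summable
  have hS : Summable (fun i => b i * (F i - F (i - 1))) :=
    Summable.of_nonneg_of_le (fun i => mul_nonneg (hbr _).1 (hdF0 i))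
      (fun i => mul_le_of_le_one_left (hdF0 i) (hbr _).2) hdF.summable
  -- product telescoping
  have hprod : HasSum (fun i => a i * G i - a (i - 1) * G (i - 1)) 1 := by
    have := aux_telescope (Φ := fun i => a i * G i) (c := 1 * 1) (d := 0 * 0)
      (fun i j hij => mul_le_mul (ham hij) (hGmono hij) (hGrange i).1 (har j).1)
      (hab.mul hGbot) (hat.mul hGtop)
    simpa using this
  have hQ : HasSum (fun i => G i * (a i - a (i - 1)))
      (1 - ∑' i, a (i - 1) * (G i - G (i - 1))) := by
    refine (aux_congr fun i => ?_).mpr (hprod.sub hP.hasSum)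
    ring
  have hin : ∀ j, HasSum (fun i => G i * (w (i - j) * (F j - F (j - 1))))
      (b j * (F j - F (j - 1))) := by
    intro j
    have h1 : HasSum (fun i => w (j - i) * G i) (b j) := (aux_summ' hw hw0 hGrange j).hasSum
    refine (aux_congr fun i => ?_).mpr (h1.mul_right (F j - F (j - 1)))
    rw [← hwe (j - i), neg_sub]; ring
  have hsw : ∑' j, b j * (F j - F (j - 1)) = ∑' i, G i * (a i - a (i - 1)) := by
    have hsum : Summable (Function.uncurry
        (fun j i => G i * (w (i - j) * (F j - F (j - 1))))) := by
      rw [summable_prod_of_nonneg]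
      · refine ⟨fun j => (hin j).summable, ?_⟩
        simpa only [Function.uncurry_apply_pair, (hin _).tsum_eq] using hS
      · rintro ⟨j, i⟩
        exact mul_nonneg (hGrange i).1 (mul_nonneg (hw0 _) (hdF0 j))
    have hc := hsum.tsum_comm
    have e1 : ∀ j, ∑' i, G i * (w (i - j) * (F j - F (j - 1))) = b j * (F j - F (j - 1)) :=
      fun j => (hin j).tsum_eq
    have e2 : ∀ i, ∑' j, G i * (w (i - j) * (F j - F (j - 1))) = G i * (a i - a (i - 1)) :=
      fun i => ((aux_dconv_diff hw hw0 hFrange i).mul_left (G i)).tsum_eq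
    simp_rw [e1, e2] at hc
    exact hc.symm
  rw [hQ.tsum_eq] at hsw
  set P := ∑' i, a (i - 1) * (G i - G (i - 1)) with hPdef
  have hS' : HasSum (fun i => b i * (F i - F (i - 1))) (1 - P) := hsw ▸ hS.hasSum
  have u1 : ∫ x in (0:ℝ)..1, Xinv hg x ≤ P + M * 1 :=
    hasSum_le (fun i => by nlinarith [(htb i).2, hda i, hdG0 i]) ht (hP.hasSum.add (hdG.mul_left M))
  have l1 : P ≤ ∫ x in (0:ℝ)..1, Xinv hg x := hasSum_le (fun i => (htb i).1) hP.hasSum ht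
  have u2 : ∫ x in (0:ℝ)..1, Xinv hf x ≤ 1 - P := hasSum_le (fun i => (hsb i).2) hs hS'
  have l2 : 1 - P - M * 1 ≤ ∫ x in (0:ℝ)..1, Xinv hf x :=
    hasSum_le (fun i => by nlinarith [(hsb i).1, hdb i, hdF0 i]) (hS'.sub (hdF.mul_left M)) hs
  unfold Agap Pot
  rw [show 2 * Δ * kerSup ω = 2 * M by rw [hMdef]; ring, abs_le]
  constructor <;> linarith
end
end

section
/- C² discrete fixed point bound. Let ω be an averaging kernel with Δ-discretization ω̂ and let hf, hg : [0,1] → [0,1] be nondecreasing and twice continuously differentiable. Suppose there exist lattice functions F, G : {x_i = iΔ} → [0,1], nondecreasing in i, with limits 0 at −∞ and 1 at +∞, satisfying G(x_i) = hg((F ⊗ ω̂)(x_i)) and F(x_i) = hf((G ⊗ ω̂)(x_i)) for all i (a (0,1)-interpolating spatial fixed point of the discrete spatially coupled recursion). Then |A(hf, hg)| ≤ (1/2)·(‖hf″‖∞ + ‖hg″‖∞)·‖ω‖∞²·Δ². -/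
open MeasureTheory Filter Set

noncomputable section

lemma tele {s : ℤ → ℝ} (hs : Monotone s) {a b : ℝ} (ha : Tendsto s atBot (nhds a))
    (hb : Tendsto s atTop (nhds b)) : HasSum (fun i : ℤ => s (i + 1) - s i) (b - a) := by
  have h1 : HasSum (fun n : ℕ => s ((n : ℤ) + 1) - s n) (b - s 0) := by
    rw [hasSum_iff_tendsto_nat_of_nonneg (fun i => sub_nonneg.2 (hs (by lia)))]
    have : ∀ n : ℕ, ∑ i ∈ Finset.range n, (s ((i : ℤ) + 1) - s i) = s n - s 0 := by
      intro n
      have := Finset.sum_range_sub (fun k : ℕ => s (k : ℤ)) n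
      simpa using this
    simp_rw [this]
    exact (hb.comp tendsto_natCast_atTop_atTop).sub_const _
  have h2 : HasSum (fun n : ℕ => s (-((n : ℤ) + 1) + 1) - s (-((n : ℤ) + 1))) (s 0 - a) := by
    rw [hasSum_iff_tendsto_nat_of_nonneg (fun i => sub_nonneg.2 (hs (by lia)))]
    have : ∀ n : ℕ, ∑ i ∈ Finset.range n, (s (-((i : ℤ) + 1) + 1) - s (-((i : ℤ) + 1)))
        = s 0 - s (-(n : ℤ)) := by
      intro n
      induction n with
      | zero => simp
      | succ n ih =>
        rw [Finset.sum_range_succ, ih]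
        have : (-((n : ℤ) + 1) + 1) = -(n : ℤ) := by ring
        rw [this]; push_cast; ring
    simp_rw [this]
    exact (ha.comp (tendsto_neg_atTop_atBot.comp tendsto_natCast_atTop_atTop)).const_sub _
  have := HasSum.of_nat_of_neg_add_one (f := fun i : ℤ => s (i + 1) - s i) h1 h2
  convert this using 1; ring

lemma kerSup_ae {ω : ℝ → ℝ} (hω : IsAveragingKernel ω) : ∀ᵐ x, ω x ≤ kerSup ω := by
  obtain ⟨-, h0, hbv, hint, -⟩ := hω
  have hfin : eLpNorm ω ⊤ volume ≠ ⊤ := by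
    refine (eLpNormEssSup_lt_top_of_ae_bound (C := |ω 0| + (eVariationOn ω univ).toReal) ?_).ne
    refine Eventually.of_forall fun x => ?_
    have h := hbv.dist_le (mem_univ x) (mem_univ (0:ℝ))
    rw [Real.dist_eq] at h
    have := abs_sub_abs_le_abs_sub (ω x) (ω 0)
    rw [Real.norm_eq_abs]; linarith
  have := enorm_ae_le_eLpNormEssSup ω (volume : Measure ℝ)
  filter_upwards [this] with x hx
  unfold kerSup
  rw [← eLpNorm_exponent_top] at hx
  have := ENNReal.toReal_mono hfin hx
  rw [toReal_enorm, Real.norm_eq_abs] at this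
  exact (le_abs_self _).trans this

lemma dker_nonneg {ω : ℝ → ℝ} (hω : IsAveragingKernel ω) {Δ : ℝ} (hΔ : 0 < Δ) (i : ℤ) :
    0 ≤ dker ω Δ i :=
  intervalIntegral.integral_nonneg (by nlinarith) fun x _ => hω.2.1 x

lemma dker_even {ω : ℝ → ℝ} (hω : IsAveragingKernel ω) (Δ : ℝ) (i : ℤ) :
    dker ω Δ (-i) = dker ω Δ i := by
  unfold dker
  have h := intervalIntegral.integral_comp_neg (a := ((i : ℝ) - 1/2) * Δ)
    (b := ((i : ℝ) + 1/2) * Δ) ω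
  simp_rw [hω.1] at h
  rw [h]
  congr 1 <;> push_cast <;> ring

lemma dker_le {ω : ℝ → ℝ} (hω : IsAveragingKernel ω) {Δ : ℝ} (hΔ : 0 < Δ) (i : ℤ) :
    dker ω Δ i ≤ kerSup ω * Δ := by
  unfold dker
  have h : ∫ z in (((i : ℝ) - 1/2) * Δ)..(((i : ℝ) + 1/2) * Δ), ω z ≤
      ∫ z in (((i : ℝ) - 1/2) * Δ)..(((i : ℝ) + 1/2) * Δ), kerSup ω := by
    refine intervalIntegral.integral_mono_ae (by nlinarith) ?_ ?_ (kerSup_ae hω)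
    · exact hω.2.2.2.1.intervalIntegrable
    · exact intervalIntegrable_const
  refine h.trans (le_of_eq ?_)
  simp; ring

lemma dker_hasSum {ω : ℝ → ℝ} (hω : IsAveragingKernel ω) {Δ : ℝ} (hΔ : 0 < Δ) :
    HasSum (dker ω Δ) 1 := by
  have hint := hω.2.2.2.1
  let s : ℤ → ℝ := fun i => ∫ z in (0:ℝ)..(((i : ℝ) - 1/2) * Δ), ω z
  have hd : ∀ i, s (i + 1) - s i = dker ω Δ i := by
    intro i
    simp only [s, dker]
    rw [intervalIntegral.integral_interval_sub_left hint.intervalIntegrable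
      hint.intervalIntegrable]
    congr 1; push_cast; ring
  have hm : Monotone s := monotone_int_of_le_succ fun i => by
    have := hd i; have := dker_nonneg hω hΔ i; linarith
  have tt : Tendsto (fun i : ℤ => ((i : ℝ) - 1/2) * Δ) atTop atTop :=
    (tendsto_atTop_add_const_right _ (-(1/2)) tendsto_intCast_atTop_atTop).atTop_mul_const hΔ
  have tb : Tendsto (fun i : ℤ => ((i : ℝ) - 1/2) * Δ) atBot atBot :=
    (tendsto_atBot_add_const_right _ (-(1/2)) (tendsto_intCast_atBot_iff.2 tendsto_id)).atBot_mul_const hΔ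
  have h1 : Tendsto s atTop (nhds (∫ z in Ioi (0:ℝ), ω z)) :=
    intervalIntegral_tendsto_integral_Ioi 0 hint.integrableOn tt
  have h2 : Tendsto s atBot (nhds (- ∫ z in Iic (0:ℝ), ω z)) := by
    have := (intervalIntegral_tendsto_integral_Iic 0 hint.integrableOn tb).neg
    refine this.congr fun i => ?_
    simp only [s]
    rw [intervalIntegral.integral_symm, neg_neg]
  have := tele hm h2 h1
  simp_rw [hd] at this
  have e : (∫ z in Ioi (0:ℝ), ω z) - - ∫ z in Iic (0:ℝ), ω z = 1 := by
    rw [← hω.2.2.2.2, ← intervalIntegral.integral_Iic_add_Ioi (b := 0) hint.integrableOn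
      hint.integrableOn]; ring
  rwa [e] at this

lemma Xinv_integral {h : ℝ → ℝ} (hh : MemX h) (hc : ContinuousOn h (Icc 0 1)) :
    ∫ x in (0:ℝ)..1, Xinv h x = 1 - ∫ x in (0:ℝ)..1, h x := by
  obtain ⟨hm, hr⟩ := hh
  have hI : Integrable h (volume.restrict (Icc (0:ℝ) 1)) := hc.integrableOn_Icc
  have key := hI.integral_eq_integral_meas_le (by
    rw [EventuallyLE, ae_restrict_iff' measurableSet_Icc]
    exact Eventually.of_forall fun x hx => (hr hx).1)
  have hbdd : ∀ t, BddBelow ({1} ∪ {u ∈ Icc (0:ℝ) 1 | t ≤ h u}) := fun t => by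
    refine ⟨0, ?_⟩
    rintro x (hx | hx)
    · rw [mem_singleton_iff.1 hx]; norm_num
    · exact hx.1.1
  have hX : ∀ t, Xinv h t ∈ Icc (0:ℝ) 1 := fun t => by
    constructor
    · refine le_csInf ⟨1, by simp⟩ ?_
      rintro x (hx | hx)
      · rw [mem_singleton_iff.1 hx]; norm_num
      · exact hx.1.1
    · exact csInf_le (hbdd t) (by simp)
  have meas : ∀ t, (volume.restrict (Icc (0:ℝ) 1)).real {a | t ≤ h a} = 1 - Xinv h t := by
    intro t
    have hms : volume.restrict (Icc (0:ℝ) 1) {a | t ≤ h a}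
        = volume ({a | t ≤ h a} ∩ Icc 0 1) := by
      rw [Measure.restrict_apply' measurableSet_Icc]
    rw [measureReal_def, hms]
    have h1 : {a | t ≤ h a} ∩ Icc 0 1 ⊆ Icc (Xinv h t) 1 := by
      rintro x ⟨hx, hx'⟩
      exact ⟨csInf_le (hbdd t) (Or.inr ⟨hx', hx⟩), hx'.2⟩
    have h2 : Ioo (Xinv h t) 1 ⊆ {a | t ≤ h a} ∩ Icc 0 1 := by
      rintro x ⟨hx, hx'⟩
      have hx01 : x ∈ Icc (0:ℝ) 1 := ⟨(hX t).1.trans hx.le, hx'.le⟩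
      refine ⟨?_, hx01⟩
      obtain ⟨y, hy, hyx⟩ := exists_lt_of_csInf_lt ⟨1, by simp⟩ hx
      rcases hy with hy | hy
      · rw [mem_singleton_iff.1 hy] at hyx; linarith
      · exact hy.2.trans (hm hy.1 hx01 hyx.le)
    have e : volume ({a | t ≤ h a} ∩ Icc 0 1) = ENNReal.ofReal (1 - Xinv h t) := by
      apply le_antisymm
      · exact (measure_mono h1).trans (by rw [Real.volume_Icc])
      · exact le_trans (by rw [Real.volume_Ioo]) (measure_mono h2)
    rw [e, ENNReal.toReal_ofReal (by linarith [(hX t).2])]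
  simp_rw [meas] at key
  have hXm : Monotone (Xinv h) := fun s t hst => by
    refine csInf_le_csInf (hbdd s) ⟨1, by simp⟩ ?_
    exact union_subset_union_right _ fun u hu => ⟨hu.1, hst.trans hu.2⟩
  have hX1 : ∀ t, 1 < t → Xinv h t = 1 := fun t ht => by
    have : {u ∈ Icc (0:ℝ) 1 | t ≤ h u} = ∅ := by
      ext u; simp only [mem_ofPred_eq, mem_empty_iff_false, iff_false, not_and]
      intro hu; have := (hr hu).2; linarith
    unfold Xinv; rw [this]; simp
  have e2 : ∫ t in Ioi (0:ℝ), (1 - Xinv h t) = ∫ t in Ioc (0:ℝ) 1, (1 - Xinv h t) := by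
    apply setIntegral_eq_of_subset_of_forall_sdiff_eq_zero measurableSet_Ioi Ioc_subset_Ioi_self
    rintro x ⟨hx, hx'⟩
    have : 1 < x := by
      by_contra hc; exact hx' ⟨hx, not_lt.1 hc⟩
    rw [hX1 x this]; ring
  rw [e2, integral_Icc_eq_integral_Ioc, ← intervalIntegral.integral_of_le zero_le_one,
    ← intervalIntegral.integral_of_le zero_le_one, intervalIntegral.integral_sub
    intervalIntegrable_const hXm.intervalIntegrable] at key
  simp at key
  linarith

lemma trap {h : ℝ → ℝ} (hC : ContDiffOn ℝ 2 h (Icc 0 1)) {a b : ℝ} (ha : a ∈ Icc (0:ℝ) 1)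
    (hb : b ∈ Icc (0:ℝ) 1) (hab : a ≤ b) :
    |(b - a) / 2 * (h a + h b) - ∫ x in a..b, h x| ≤
      (b - a) ^ 3 * sSup ((fun u => |iteratedDerivWithin 2 h (Icc 0 1) u|) '' Icc (0:ℝ) 1) / 12 := by
  rcases hab.eq_or_lt with rfl | hlt
  · simp
  have hsub : Icc a b ⊆ Icc (0:ℝ) 1 := Icc_subset_Icc ha.1 hb.2
  have hcont : ContinuousOn (fun u => |iteratedDerivWithin 2 h (Icc 0 1) u|) (Icc (0:ℝ) 1) :=
    (hC.continuousOn_iteratedDerivWithin (by norm_num) (uniqueDiffOn_Icc zero_lt_one)).abs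
  have hB : BddAbove ((fun u => |iteratedDerivWithin 2 h (Icc 0 1) u|) '' Icc (0:ℝ) 1) :=
    (isCompact_Icc.image_of_continuousOn hcont).bddAbove
  have hle : ∀ x ∈ Icc (0:ℝ) 1, |iteratedDerivWithin 2 h (Icc 0 1) x| ≤
    sSup ((fun u => |iteratedDerivWithin 2 h (Icc 0 1) u|) '' Icc (0:ℝ) 1) := fun x hx =>
      le_csSup hB ⟨x, hx, rfl⟩
  have := trapezoidal_error_le_of_c2 (a := a) (b := b) (N := 1) (f := h)
    (by rw [uIcc_of_le hab]; exact hC.mono hsub)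
    (ζ := sSup ((fun u => |iteratedDerivWithin 2 h (Icc 0 1) u|) '' Icc (0:ℝ) 1)) (by
      rw [uIcc_of_le hab]
      intro x
      by_cases hx : x ∈ Icc a b
      · rw [iteratedDerivWithin_eq_iteratedFDerivWithin, iteratedFDerivWithin_subset hsub
          (uniqueDiffOn_Icc hlt) (uniqueDiffOn_Icc zero_lt_one) hC hx]
        exact hle x (hsub hx)
      · rw [iteratedDerivWithin_succ, derivWithin_zero_of_notMem_closure
          (by rwa [isClosed_Icc.closure_eq]), abs_zero]
        exact (abs_nonneg _).trans (hle a ha)) one_pos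
  unfold trapezoidal_error at this
  rw [trapezoidal_integral_one, abs_of_pos (sub_pos.2 hlt)] at this
  simpa using this

lemma hsCongr {ι : Type*} {f g : ι → ℝ} {a : ℝ} (h : HasSum f a) (e : ∀ i, f i = g i) :
    HasSum g a := by
  have : f = g := funext e
  rwa [← this]

lemma dconv_hasSum {w : ℤ → ℝ} (hw0 : ∀ k, 0 ≤ w k) (hws : HasSum w 1) {F : ℤ → ℝ}
    (hF : ∀ i, F i ∈ Icc (0:ℝ) 1) (i : ℤ) :
    HasSum (fun k => w k * F (i - k)) (dconv F w i) := by
  have hs : Summable (fun k => w k * F (i - k)) :=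
    Summable.of_nonneg_of_le (fun k => mul_nonneg (hw0 k) (hF _).1)
      (fun k => mul_le_of_le_one_right (hw0 k) (hF _).2) hws.summable
  have : dconv F w i = ∑' k, w k * F (i - k) := by
    unfold dconv
    rw [← (Equiv.subLeft i).tsum_eq]
    simp
  rw [this]; exact hs.hasSum

lemma dconv_mem {w : ℤ → ℝ} (hw0 : ∀ k, 0 ≤ w k) (hws : HasSum w 1) {F : ℤ → ℝ}
    (hF : ∀ i, F i ∈ Icc (0:ℝ) 1) (i : ℤ) : dconv F w i ∈ Icc (0:ℝ) 1 :=
  ⟨(dconv_hasSum hw0 hws hF i).nonneg fun k => mul_nonneg (hw0 k) (hF _).1,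
    hasSum_le (fun k => mul_le_of_le_one_right (hw0 k) (hF _).2) (dconv_hasSum hw0 hws hF i) hws⟩

lemma dconv_mono {w : ℤ → ℝ} (hw0 : ∀ k, 0 ≤ w k) (hws : HasSum w 1) {F : ℤ → ℝ}
    (hF : ∀ i, F i ∈ Icc (0:ℝ) 1) (hm : Monotone F) : Monotone (dconv F w) := fun i j hij =>
  hasSum_le (fun k => mul_le_mul_of_nonneg_left (hm (by lia)) (hw0 k))
    (dconv_hasSum hw0 hws hF i) (dconv_hasSum hw0 hws hF j)

lemma dconv_lim {w : ℤ → ℝ} (hw0 : ∀ k, 0 ≤ w k) (hws : HasSum w 1) {F : ℤ → ℝ}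
    (hF : ∀ i, F i ∈ Icc (0:ℝ) 1) {l : Filter ℤ} {c : ℝ}
    (h : ∀ k : ℤ, Tendsto (fun i => F (i - k)) l (nhds c)) :
    Tendsto (dconv F w) l (nhds c) := by
  have := tendsto_tsum_of_dominated_convergence (𝓕 := l) (f := fun i k => w k * F (i - k))
    (g := fun k => w k * c) (bound := w) hws.summable (fun k => (h k).const_mul _)
    (Eventually.of_forall fun i k => by
      rw [Real.norm_eq_abs, abs_of_nonneg (mul_nonneg (hw0 k) (hF _).1)]
      exact mul_le_of_le_one_right (hw0 k) (hF _).2)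
  rw [tsum_mul_right, hws.tsum_eq, one_mul] at this
  refine this.congr fun i => (dconv_hasSum hw0 hws hF i).tsum_eq

lemma tele_shift {F : ℤ → ℝ} (hm : Monotone F) (h0 : Tendsto F atBot (nhds 0))
    (h1 : Tendsto F atTop (nhds 1)) (i : ℤ) :
    HasSum (fun k => F (i - k + 1) - F (i - k)) 1 := by
  have := tele hm h0 h1
  rw [← (Equiv.subLeft i).hasSum_iff] at this
  simpa [Function.comp_def] using this

lemma dconv_diff {w : ℤ → ℝ} (hw0 : ∀ k, 0 ≤ w k) (hws : HasSum w 1) {F : ℤ → ℝ}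
    (hF : ∀ i, F i ∈ Icc (0:ℝ) 1) (i : ℤ) :
    HasSum (fun k => w k * (F (i - k + 1) - F (i - k))) (dconv F w (i + 1) - dconv F w i) := by
  have := (dconv_hasSum hw0 hws hF (i + 1)).sub (dconv_hasSum hw0 hws hF i)
  refine hsCongr this fun k => ?_
  rw [show i + 1 - k = i - k + 1 by ring]; ring

lemma dconv_diff_le {w : ℤ → ℝ} (hw0 : ∀ k, 0 ≤ w k) (hws : HasSum w 1) {C : ℝ}
    (hwC : ∀ k, w k ≤ C) {F : ℤ → ℝ}
    (hF : ∀ i, F i ∈ Icc (0:ℝ) 1) (hm : Monotone F) (h0 : Tendsto F atBot (nhds 0))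
    (h1 : Tendsto F atTop (nhds 1)) (i : ℤ) :
    dconv F w (i + 1) - dconv F w i ≤ C := by
  have := hasSum_le (fun k => mul_le_mul_of_nonneg_right (hwC k) (sub_nonneg.2 (hm (by lia))))
    (dconv_diff hw0 hws hF i) ((tele_shift hm h0 h1 i).mul_left C)
  simpa using this

def shE : ℤ × ℤ ≃ ℤ × ℤ where
  toFun p := (p.1 - p.2, p.2)
  invFun p := (p.1 + p.2, p.2)
  left_inv p := by simp
  right_inv p := by simp

def shI : ℤ × ℤ ≃ ℤ × ℤ where
  toFun p := (p.1 - p.2, -p.2)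
  invFun p := (p.1 - p.2, -p.2)
  left_inv p := by simp
  right_inv p := by simp

lemma half_summable {w : ℤ → ℝ} (hw0 : ∀ k, 0 ≤ w k) (hws : HasSum w 1) {F G : ℤ → ℝ}
    (hF : ∀ i, F i ∈ Icc (0:ℝ) 1) (hGm : Monotone G) (hG0 : Tendsto G atBot (nhds 0))
    (hG1 : Tendsto G atTop (nhds 1)) :
    Summable (fun p : ℤ × ℤ => w p.2 * (G (p.1 - p.2 + 1) - G (p.1 - p.2)) *
      ((F p.1 + F (p.1 + 1)) / 2)) := by
  have h1 : Summable (fun p : ℤ × ℤ => (G (p.1 + 1) - G p.1) * w p.2) :=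
    (tele hGm hG0 hG1).summable.mul_of_nonneg hws.summable
      (fun i => sub_nonneg.2 (hGm (by lia))) hw0
  rw [← shE.summable_iff] at h1
  have hn : ∀ p : ℤ × ℤ, 0 ≤ w p.2 * (G (p.1 - p.2 + 1) - G (p.1 - p.2)) := fun p =>
    mul_nonneg (hw0 _) (sub_nonneg.2 (hGm (by lia)))
  refine Summable.of_nonneg_of_le (fun p => mul_nonneg (hn p) ?_) (fun p => ?_) h1
  · linarith [(hF p.1).1, (hF (p.1 + 1)).1]
  · refine (mul_le_of_le_one_right (hn p) ?_).trans (le_of_eq ?_)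
    · linarith [(hF p.1).2, (hF (p.1 + 1)).2]
    · simp only [shE, Function.comp, Equiv.coe_fn_mk]; ring

lemma half_hasSum {w : ℤ → ℝ} (hw0 : ∀ k, 0 ≤ w k) (hws : HasSum w 1) {F G : ℤ → ℝ}
    (hF : ∀ i, F i ∈ Icc (0:ℝ) 1) (hG : ∀ i, G i ∈ Icc (0:ℝ) 1) {S : ℝ}
    (hS : HasSum (fun p : ℤ × ℤ => w p.2 * (G (p.1 - p.2 + 1) - G (p.1 - p.2)) *
      ((F p.1 + F (p.1 + 1)) / 2)) S) :
    HasSum (fun i => (dconv G w (i + 1) - dconv G w i) / 2 * (F i + F (i + 1))) S := by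
  have := hS.prod_fiberwise (fun i => (dconv_diff hw0 hws hG i).mul_right ((F i + F (i + 1)) / 2))
  convert this using 2 with i
  ring

lemma total {w : ℤ → ℝ} (hw0 : ∀ k, 0 ≤ w k) (hwe : ∀ k, w (-k) = w k) (hws : HasSum w 1)
    {F G : ℤ → ℝ} (hFm : Monotone F) (hGm : Monotone G)
    (hF : ∀ i, F i ∈ Icc (0:ℝ) 1) (hG : ∀ i, G i ∈ Icc (0:ℝ) 1)
    (hF0 : Tendsto F atBot (nhds 0)) (hF1 : Tendsto F atTop (nhds 1))
    (hG0 : Tendsto G atBot (nhds 0)) (hG1 : Tendsto G atTop (nhds 1)) :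
    ∃ S T : ℝ, S + T = 1 ∧
    HasSum (fun i => (dconv G w (i + 1) - dconv G w i) / 2 * (F i + F (i + 1))) S ∧
    HasSum (fun i => (dconv F w (i + 1) - dconv F w i) / 2 * (G i + G (i + 1))) T := by
  have hS := (half_summable hw0 hws hF hGm hG0 hG1).hasSum
  have hT := (half_summable hw0 hws hG hFm hF0 hF1).hasSum
  refine ⟨_, _, ?_, half_hasSum hw0 hws hF hG hS, half_hasSum hw0 hws hG hF hT⟩
  have hT' := hT
  rw [← shI.hasSum_iff] at hT'
  have hst := hS.add hT'
  rw [← (Equiv.prodComm ℤ ℤ).hasSum_iff] at hst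
  have h := hst.prod_fiberwise (g := fun k => w k * 1) (fun k => by
    have hprod : HasSum (fun i : ℤ => F (i + 1) * G (i + 1 - k) - F i * G (i - k)) (1 * 1 - 0 * 0) := by
      apply tele (s := fun i => F i * G (i - k))
      · intro i j hij
        exact mul_le_mul (hFm hij) (hGm (by lia)) (hG _).1 (hF _).1
      · exact hF0.mul (hG0.comp (tendsto_atBot_add_const_right _ (-k) tendsto_id))
      · exact hF1.mul (hG1.comp (tendsto_atTop_add_const_right _ (-k) tendsto_id))
    have := hprod.mul_left (w k)
    norm_num at this
    rw [mul_one]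
    refine hsCongr this fun i => ?_
    simp only [shI, Function.comp, Equiv.coe_fn_mk, Equiv.prodComm_apply, Prod.swap, hwe]
    rw [show i - k - -k = i by ring, show i + 1 - k = i - k + 1 by ring]
    ring)
  simp only [mul_one] at h
  exact h.unique hws

lemma err {h : ℝ → ℝ} (hh : MemX h) (hC : ContDiffOn ℝ 2 h (Icc 0 1)) {s : ℤ → ℝ}
    (hm : Monotone s) (hs : ∀ i, s i ∈ Icc (0:ℝ) 1) (h0 : Tendsto s atBot (nhds 0))
    (h1 : Tendsto s atTop (nhds 1)) {C : ℝ} (hd : ∀ i, s (i + 1) - s i ≤ C) {S : ℝ}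
    (hS : HasSum (fun i => (s (i + 1) - s i) / 2 * (h (s i) + h (s (i + 1)))) S) :
    |S - ∫ x in (0:ℝ)..1, h x| ≤
      C ^ 2 * sSup ((fun u => |iteratedDerivWithin 2 h (Icc 0 1) u|) '' Icc (0:ℝ) 1) / 12 := by
  set M := sSup ((fun u => |iteratedDerivWithin 2 h (Icc 0 1) u|) '' Icc (0:ℝ) 1) with hM
  have hM0 : 0 ≤ M := Real.sSup_nonneg (by rintro _ ⟨u, -, rfl⟩; exact abs_nonneg _)
  have hcont : ContinuousOn h (Icc 0 1) := hC.continuousOn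
  have hii : ∀ a ∈ Icc (0:ℝ) 1, ∀ b ∈ Icc (0:ℝ) 1, IntervalIntegrable h volume a b :=
    fun a ha b hb => (hcont.mono (uIcc_subset_Icc ha hb)).intervalIntegrable
  have z0 : (0:ℝ) ∈ Icc (0:ℝ) 1 := by simp
  have z1 : (1:ℝ) ∈ Icc (0:ℝ) 1 := by simp
  let P : ℝ → ℝ := fun x => ∫ t in (0:ℝ)..x, h t
  have hP : ContinuousOn P (Icc 0 1) := by
    have := intervalIntegral.continuousOn_primitive_interval (a := 0) (b := 1) (μ := volume)
      (f := h) (by rw [uIcc_of_le zero_le_one]; exact hcont.integrableOn_Icc)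
    rwa [uIcc_of_le zero_le_one] at this
  have hdiff : ∀ i, P (s (i + 1)) - P (s i) = ∫ t in (s i)..(s (i + 1)), h t := fun i =>
    intervalIntegral.integral_interval_sub_left (hii _ z0 _ (hs _)) (hii _ z0 _ (hs _))
  have hPm : Monotone (fun i => P (s i)) := monotone_int_of_le_succ fun i => by
    have : 0 ≤ ∫ t in (s i)..(s (i + 1)), h t :=
      intervalIntegral.integral_nonneg (hm (by lia)) fun x hx =>
        (hh.2 ⟨(hs i).1.trans hx.1, hx.2.trans (hs _).2⟩).1
    have := hdiff i
    linarith
  have hlim : ∀ {l : Filter ℤ} {c : ℝ}, c ∈ Icc (0:ℝ) 1 → Tendsto s l (nhds c) →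
      Tendsto (fun i => P (s i)) l (nhds (P c)) := fun {l c} hc ht =>
    (hP c hc).tendsto.comp (tendsto_nhdsWithin_iff.2 ⟨ht, Eventually.of_forall hs⟩)
  have hI := tele hPm (hlim z0 h0) (hlim z1 h1)
  simp only [hdiff] at hI
  have hP0 : P 0 = 0 := intervalIntegral.integral_same
  rw [hP0, sub_zero] at hI
  have hE := hS.sub hI
  have hB := (tele hm h0 h1).mul_left (C ^ 2 * M / 12)
  have hbound : ∀ i, |(s (i + 1) - s i) / 2 * (h (s i) + h (s (i + 1)))
      - ∫ t in (s i)..(s (i + 1)), h t| ≤ C ^ 2 * M / 12 * (s (i + 1) - s i) := by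
    intro i
    have hle : s i ≤ s (i + 1) := hm (by lia)
    refine (trap hC (hs i) (hs (i + 1)) hle).trans ?_
    rw [← hM]
    have h0' := sub_nonneg.2 hle
    have : (s (i + 1) - s i) ^ 2 ≤ C ^ 2 := pow_le_pow_left₀ h0' (hd i) 2
    have h3 := mul_le_mul_of_nonneg_right this (mul_nonneg h0' hM0)
    nlinarith
  have hup := hasSum_le (fun i => (abs_le.1 (hbound i)).2) hE hB
  have hlo := hasSum_le (fun i => (abs_le.1 (hbound i)).1) hB.neg hE
  rw [abs_le]
  change _ ≤ S - P 1 ∧ S - P 1 ≤ _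
  constructor <;> linarith

/-- **C² discrete fixed point bound.** -/
theorem discrete_fixed_point_bound_C2
    (ω hf hg : ℝ → ℝ) (Δ : ℝ) (hΔ : 0 < Δ)
    (hω : IsAveragingKernel ω) (hhf : MemX hf) (hhg : MemX hg)
    (hfC2 : ContDiffOn ℝ 2 hf (Icc 0 1)) (hgC2 : ContDiffOn ℝ 2 hg (Icc 0 1))
    (F G : ℤ → ℝ) (hFmono : Monotone F) (hGmono : Monotone G)
    (hFrange : ∀ i, F i ∈ Icc (0:ℝ) 1) (hGrange : ∀ i, G i ∈ Icc (0:ℝ) 1)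
    (hFbot : Filter.Tendsto F Filter.atBot (nhds 0))
    (hFtop : Filter.Tendsto F Filter.atTop (nhds 1))
    (hGbot : Filter.Tendsto G Filter.atBot (nhds 0))
    (hGtop : Filter.Tendsto G Filter.atTop (nhds 1))
    (hfixG : ∀ i, G i = hg (dconv F (dker ω Δ) i))
    (hfixF : ∀ i, F i = hf (dconv G (dker ω Δ) i)) :
    |Agap hf hg| ≤ (1/2) *
        (sSup ((fun u => |iteratedDerivWithin 2 hf (Icc 0 1) u|) '' Icc (0:ℝ) 1) +
          sSup ((fun u => |iteratedDerivWithin 2 hg (Icc 0 1) u|) '' Icc (0:ℝ) 1)) *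
        (kerSup ω) ^ 2 * Δ ^ 2 := by
  have hw0 := dker_nonneg hω hΔ
  have hwe := dker_even hω Δ
  have hws := dker_hasSum hω hΔ
  have hwC := dker_le hω hΔ
  have hb : ∀ k : ℤ, Tendsto (fun i : ℤ => i - k) atBot atBot := fun k =>
    tendsto_atBot_add_const_right _ (-k) tendsto_id
  have ht : ∀ k : ℤ, Tendsto (fun i : ℤ => i - k) atTop atTop := fun k =>
    tendsto_atTop_add_const_right _ (-k) tendsto_id
  obtain ⟨S, T, hST, hS, hT⟩ := total hw0 hwe hws hFmono hGmono hFrange hGrange hFbot hFtop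
    hGbot hGtop
  have e1 := err hhf hfC2 (s := dconv G (dker ω Δ)) (dconv_mono hw0 hws hGrange hGmono)
    (dconv_mem hw0 hws hGrange) (dconv_lim hw0 hws hGrange fun k => hGbot.comp (hb k))
    (dconv_lim hw0 hws hGrange fun k => hGtop.comp (ht k))
    (dconv_diff_le hw0 hws hwC hGrange hGmono hGbot hGtop) (S := S)
    (by simpa only [← hfixF] using hS)
  have e2 := err hhg hgC2 (s := dconv F (dker ω Δ)) (dconv_mono hw0 hws hFrange hFmono)
    (dconv_mem hw0 hws hFrange) (dconv_lim hw0 hws hFrange fun k => hFbot.comp (hb k))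
    (dconv_lim hw0 hws hFrange fun k => hFtop.comp (ht k))
    (dconv_diff_le hw0 hws hwC hFrange hFmono hFbot hFtop) (S := T)
    (by simpa only [← hfixG] using hT)
  have hA : Agap hf hg = (S - ∫ x in (0:ℝ)..1, hf x) + (T - ∫ x in (0:ℝ)..1, hg x) := by
    unfold Agap Pot
    rw [Xinv_integral hhf hfC2.continuousOn, Xinv_integral hhg hgC2.continuousOn]
    linarith
  rw [hA]
  refine (abs_add_le _ _).trans ((add_le_add e1 e2).trans ?_)
  have p1 : 0 ≤ sSup ((fun u => |iteratedDerivWithin 2 hf (Icc 0 1) u|) '' Icc (0:ℝ) 1) :=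
    Real.sSup_nonneg (by rintro _ ⟨u, -, rfl⟩; exact abs_nonneg _)
  have p2 : 0 ≤ sSup ((fun u => |iteratedDerivWithin 2 hg (Icc 0 1) u|) '' Icc (0:ℝ) 1) :=
    Real.sSup_nonneg (by rintro _ ⟨u, -, rfl⟩; exact abs_nonneg _)
  have := mul_nonneg (sq_nonneg (kerSup ω * Δ)) (add_nonneg p1 p2)
  nlinarith
end
end
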